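/- Let α and n be positive integers with α ≤ n ≤ 2α. Then every hke collection F with α(F) = α and |⋃F| = n satisfies |F| ≤ 2^{n−α}, and there exists an hke collection F with α(F) = α, |⋃F| = n and |F| = 2^{n−α}. In other words, the maximal cardinality a(α,n) of an hke collection F with α(F) = α and |⋃F| = n equals 2^{n−α}. -/

import Mathlib

open Finset

/-- The union of a finite collection of finite sets. -/
def famUnion (Γ : Finset (Finset ℕ)) : Finset ℕ := Γ.sup id

/-- The intersection of a finite collection of finite sets
(equal to the usual intersection when the collection is nonempty). -/
def famInter (Γ : Finset (Finset ℕ)) : Finset ℕ :=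
  (Γ.sup id).filter (fun x => ∀ A ∈ Γ, x ∈ A)

/-- `F` is a hereditary König–Egerváry (hke) collection with `α(F) = α`:
`α` is a positive integer and `|⋃Γ| + |⋂Γ| = 2α` for every nonempty subcollection `Γ` of `F`. -/
def IsHKE (F : Finset (Finset ℕ)) (α : ℕ) : Prop :=
  0 < α ∧ ∀ Γ ⊆ F, Γ.Nonempty → (famUnion Γ).card + (famInter Γ).card = 2 * α

theorem mem_famUnion' (Γ : Finset (Finset ℕ)) (x : ℕ) : x ∈ famUnion Γ ↔ ∃ A ∈ Γ, x ∈ A := by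
  simp [famUnion, Finset.mem_sup]

theorem mem_famInter' (Γ : Finset (Finset ℕ)) (h : Γ.Nonempty) (x : ℕ) :
    x ∈ famInter Γ ↔ ∀ A ∈ Γ, x ∈ A := by
  unfold famInter
  rw [Finset.mem_filter]
  refine ⟨fun h => h.2, fun hx => ⟨?_, hx⟩⟩
  obtain ⟨A, hA⟩ := h
  exact (mem_famUnion' Γ x).2 ⟨A, hA, hx A hA⟩

theorem hke_card_mem {F : Finset (Finset ℕ)} {α : ℕ} (h : IsHKE F α) {A : Finset ℕ} (hA : A ∈ F) :
    A.card = α := by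
  have := h.2 {A} (by simpa using hA) (by simp)
  have e1 : famUnion {A} = A := by ext x; simp [mem_famUnion']
  have e2 : famInter {A} = A := by ext x; simp [mem_famInter']
  rw [e1, e2] at this
  omega

theorem hke_inj {F : Finset (Finset ℕ)} {α : ℕ} (h : IsHKE F α) {A B C : Finset ℕ} (hA : A ∈ F)
    (hB : B ∈ F) (hC : C ∈ F) (e : A ∩ B = A ∩ C) : C ⊆ B := by
  have h2 := h.2 {A, B} (by grind) (by simp)
  have h3 := h.2 {A, B, C} (by grind) (by simp)
  have e1 : famUnion {A, B} = A ∪ B := by ext x; simp [mem_famUnion']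
  have e2 : famInter {A, B} = A ∩ B := by ext x; simp [mem_famInter']
  have e3 : famUnion {A, B, C} = A ∪ B ∪ C := by ext x; simp [mem_famUnion', or_assoc]
  have e4 : famInter {A, B, C} = A ∩ B := by
    ext x
    have := congrArg (x ∈ ·) e
    simp [mem_famInter'] at this ⊢
    tauto
  rw [e1, e2] at h2
  rw [e3, e4] at h3
  have e5 : A ∪ B = A ∪ B ∪ C :=
    Finset.eq_of_subset_of_card_le Finset.subset_union_left (by omega)
  intro x hx
  have h6 : x ∈ A ∪ B := by rw [e5]; simp [hx]
  rcases Finset.mem_union.1 h6 with h7 | h7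
  · have : x ∈ A ∩ C := by simp [h7, hx]
    rw [← e] at this
    exact (Finset.mem_inter.1 this).2
  · exact h7

def pairSet (k n : ℕ) (S : Finset ℕ) : Finset ℕ :=
  (Finset.range n).filter (fun x => (x < k → x ∈ S) ∧ (k ≤ x → x < 2 * k → x - k ∉ S))

theorem mem_pairSet (k n : ℕ) (S : Finset ℕ) (x : ℕ) : x ∈ pairSet k n S ↔
    x < n ∧ (x < k → x ∈ S) ∧ (k ≤ x → x < 2 * k → x - k ∉ S) := by
  simp [pairSet]

theorem pairSet_hke (k n : ℕ) (hk : 2 * k ≤ n) (Γ : Finset (Finset ℕ))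
    (hΓ : Γ ⊆ (Finset.range k).powerset.image (pairSet k n)) (hne : Γ.Nonempty) :
    (famUnion Γ).card + (famInter Γ).card = n + (n - 2 * k) := by
  have key : ∀ A ∈ Γ, (∀ x ∈ A, x < n) ∧ (∀ x, 2 * k ≤ x → x < n → x ∈ A) ∧
      ∀ x, x < k → (x ∈ A ↔ x + k ∉ A) := by
    intro A hA
    obtain ⟨S, -, rfl⟩ := Finset.mem_image.1 (hΓ hA)
    refine ⟨?_, ?_, ?_⟩
    · intro x hx
      exact ((mem_pairSet _ _ _ _).1 hx).1
    · intro x h1 h2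
      rw [mem_pairSet]
      exact ⟨h2, by omega, by omega⟩
    · intro x hx
      have h1 : x < n := by omega
      have h2 : x + k < n := by omega
      have h3 : x + k < 2 * k := by omega
      have h4 : ¬ k ≤ x := by omega
      simp [mem_pairSet, h1, h2, h3, hx, h4]
  have hU : famUnion Γ ⊆ Finset.range n := by
    intro x hx
    obtain ⟨A, hA, hxA⟩ := (mem_famUnion' _ _).1 hx
    exact Finset.mem_range.2 ((key A hA).1 x hxA)
  have hUc := Finset.card_sdiff_add_card_eq_card hU
  have hI : Finset.Ico (2 * k) n ⊆ famInter Γ := by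
    intro x hx
    rw [Finset.mem_Ico] at hx
    rw [mem_famInter' _ hne]
    exact fun A hA => (key A hA).2.1 x hx.1 hx.2
  have hIc := Finset.card_sdiff_add_card_eq_card hI
  have hIn : ∀ x ∈ famInter Γ, x < n := by
    intro x hx
    obtain ⟨A, hA⟩ := hne
    exact (key A hA).1 x ((mem_famInter' _ ⟨A, hA⟩ _).1 hx A hA)
  have hUI : ∀ x, x < n → (x ∉ famUnion Γ) → x < 2 * k := by
    intro x hx hxU
    by_contra hc
    obtain ⟨A, hA⟩ := hne
    exact hxU ((mem_famUnion' _ _).2 ⟨A, hA, (key A hA).2.1 x (by omega) hx⟩)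
  have k1 : ∀ x, x < k → (x ∉ famUnion Γ ↔ x + k ∈ famInter Γ) := by
    intro x hx
    rw [mem_famInter' _ hne, mem_famUnion']
    push Not
    refine forall₂_congr fun A hA => ?_
    have := (key A hA).2.2 x hx
    tauto
  have k2 : ∀ x, x < k → (x + k ∉ famUnion Γ ↔ x ∈ famInter Γ) := by
    intro x hx
    rw [mem_famInter' _ hne, mem_famUnion']
    push Not
    refine forall₂_congr fun A hA => ?_
    have := (key A hA).2.2 x hx
    tauto
  have hb : (Finset.range n \ famUnion Γ).card = (famInter Γ \ Finset.Ico (2 * k) n).card := by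
    refine Finset.card_nbij' (fun x => if x < k then x + k else x - k)
      (fun x => if x < k then x + k else x - k) ?_ ?_ ?_ ?_
    · intro x hx
      simp only [Finset.coe_sdiff, Set.mem_diff, Finset.mem_coe, Finset.mem_range,
        Finset.mem_Ico] at hx ⊢
      have hx2 := hUI x hx.1 hx.2
      split_ifs with h
      · exact ⟨(k1 x h).1 hx.2, by omega⟩
      · refine ⟨(k2 (x - k) (by omega)).1 ?_, by omega⟩
        rw [Nat.sub_add_cancel (by omega)]
        exact hx.2
    · intro x hx
      simp only [Finset.coe_sdiff, Set.mem_diff, Finset.mem_coe, Finset.mem_range,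
        Finset.mem_Ico] at hx ⊢
      have hx2 := hIn x hx.1
      split_ifs with h
      · exact ⟨by omega, (k2 x h).2 hx.1⟩
      · refine ⟨by omega, (k1 (x - k) (by omega)).2 ?_⟩
        rw [Nat.sub_add_cancel (by omega)]
        exact hx.1
    · intro x hx
      simp only [Finset.coe_sdiff, Set.mem_diff, Finset.mem_coe, Finset.mem_range] at hx
      have hx2 := hUI x hx.1 hx.2
      grind
    · intro x hx
      simp only [Finset.coe_sdiff, Set.mem_diff, Finset.mem_coe, Finset.mem_Ico] at hx
      have hx2 := hIn x hx.1
      grind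
  rw [Finset.card_range] at hUc
  rw [Nat.card_Ico] at hIc
  omega

theorem max_card_hke_with_union (α n : ℕ) (hα : 0 < α) (h₁ : α ≤ n) (h₂ : n ≤ 2 * α) :
    (∀ F : Finset (Finset ℕ), IsHKE F α → (famUnion F).card = n →
      F.card ≤ 2 ^ (n - α)) ∧
    (∃ F : Finset (Finset ℕ), IsHKE F α ∧ (famUnion F).card = n ∧
      F.card = 2 ^ (n - α)) := by
  constructor
  · intro F hF hn
    rcases F.eq_empty_or_nonempty with rfl | hne
    · simp
    obtain ⟨A, hA⟩ := hne
    have hsub : famInter F ⊆ A := fun x hx => (mem_famInter' F ⟨A, hA⟩ x).1 hx A hA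
    have hc := hF.2 F subset_rfl ⟨A, hA⟩
    have hcA := hke_card_mem hF hA
    have : F.card ≤ (Finset.Icc (famInter F) A).card := by
      refine Finset.card_le_card_of_injOn (fun B => A ∩ B) ?_ ?_
      · intro B hB
        have hB' : B ∈ F := hB
        have : famInter F ⊆ B := fun x hx => (mem_famInter' F ⟨A, hA⟩ x).1 hx B hB'
        simp only [Finset.coe_Icc, Set.mem_Icc, Finset.le_eq_subset]
        exact ⟨Finset.subset_inter hsub this, Finset.inter_subset_left⟩
      · intro B hB C hC e
        exact subset_antisymm (hke_inj hF hA hC hB e.symm) (hke_inj hF hA hB hC e)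
    rw [Finset.card_Icc_finset hsub, hcA] at this
    have e : α - (famInter F).card = n - α := by omega
    rwa [e] at this
  · have hk : 2 * (n - α) ≤ n := by omega
    refine ⟨(Finset.range (n - α)).powerset.image (pairSet (n - α) n), ⟨hα, ?_⟩, ?_, ?_⟩
    · intro Γ hΓ hne
      rw [pairSet_hke _ n hk Γ hΓ hne]
      omega
    · have : famUnion ((Finset.range (n - α)).powerset.image (pairSet (n - α) n)) =
          Finset.range n := by
        ext x
        rw [mem_famUnion', Finset.mem_range]
        constructor
        · rintro ⟨A, hA, hx⟩
          obtain ⟨S, -, rfl⟩ := Finset.mem_image.1 hA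
          exact ((mem_pairSet _ _ _ _).1 hx).1
        · intro hx
          by_cases h : x < n - α
          · refine ⟨_, Finset.mem_image_of_mem _ (Finset.mem_powerset_self _), ?_⟩
            rw [mem_pairSet]
            exact ⟨hx, fun _ => Finset.mem_range.2 h, by omega⟩
          · refine ⟨_, Finset.mem_image_of_mem _ (Finset.empty_mem_powerset _), ?_⟩
            rw [mem_pairSet]
            exact ⟨hx, fun h' => absurd h' h, by simp⟩
      rw [this, Finset.card_range]
    · rw [Finset.card_image_of_injOn, Finset.card_powerset, Finset.card_range]
      intro S hS T hT e
      have hS' : S ⊆ Finset.range (n - α) := Finset.mem_powerset.1 (Finset.mem_coe.1 hS)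
      have hT' : T ⊆ Finset.range (n - α) := Finset.mem_powerset.1 (Finset.mem_coe.1 hT)
      have hm : ∀ S : Finset ℕ, ∀ x < n - α, (x ∈ pairSet (n - α) n S ↔ x ∈ S) := by
        intro S x hx
        rw [mem_pairSet]
        exact ⟨fun h => h.2.1 hx, fun h => ⟨by omega, fun _ => h, by omega⟩⟩
      ext x
      constructor
      · intro hx
        have hx' := Finset.mem_range.1 (hS' hx)
        rw [← hm T x hx']
        exact e ▸ (hm S x hx').2 hx
      · intro hx
        have hx' := Finset.mem_range.1 (hT' hx)
        rw [← hm S x hx']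
        exact e ▸ (hm T x hx').2 hx
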